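/- Let m ≥ 2, let F_m be a free group with free basis A of size m, and let R be a normal subgroup of F_m. Suppose w₁ and w₂ are words over A^{±1} whose corresponding paths in the Cayley graph of F_m/R (starting at the identity) are self-avoiding. If w₁ and w₂ label distinct paths (i.e., are distinct words), then w₁ and w₂ represent distinct elements of F_m/R'; moreover, the path in the Cayley graph of F_m/R' labelled by such a word w is geodesic, so the element of F_m/R' represented by w has word length exactly |w| with respect to the images of A. -/

import Mathlib

open Filter Topology

/-- Evaluate a word over the alphabet `A^{±1}` (a letter is a pair `(i, b)`, where
`b = true` means the generator `σ i` and `b = false` means its inverse) in a group. -/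
def wordEval {m : ℕ} {G : Type*} [Group G] (σ : Fin m → G)
    (w : List (Fin m × Bool)) : G :=
  (w.map fun ℓ => if ℓ.2 then σ ℓ.1 else (σ ℓ.1)⁻¹).prod

/-- The ball `B(n) = {g ∈ G : ℓ(g) ≤ n}` of radius `n` in a group with respect to the
generating map `σ`: the set of elements represented by words of length at most `n`. -/
def ball {m : ℕ} {G : Type*} [Group G] (σ : Fin m → G) (n : ℕ) : Set G :=
  {g | ∃ w : List (Fin m × Bool), w.length ≤ n ∧ wordEval σ w = g}

/-- The growth rate `ω(G, A) = lim_{n→∞} |B(n)|^{1/n}`; the limit exists by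
submultiplicativity of `|B(n)|`, hence equals the `limsup`. -/
noncomputable def growthRate {m : ℕ} {G : Type*} [Group G] (σ : Fin m → G) : ℝ :=
  Filter.limsup (fun n : ℕ => ((ball σ n).ncard : ℝ) ^ (1 / (n : ℝ))) Filter.atTop

/-- The word length `ℓ(g)` of `g` with respect to the generating map `σ`: the length of
a shortest word in the generators and their inverses representing `g`. -/
noncomputable def wordLength {m : ℕ} {G : Type*} [Group G] (σ : Fin m → G) (g : G) : ℕ :=
  sInf {n | ∃ w : List (Fin m × Bool), w.length = n ∧ wordEval σ w = g}

/-- The path in the Cayley graph of `F_m/R` (w.r.t. the images of the free basis)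
starting at the identity and labelled by the word `w` is *self-avoiding*: the vertices
it visits, i.e. the images in `F_m/R` of the prefixes of `w`, are pairwise distinct. -/
def SelfAvoiding {m : ℕ} (R : Subgroup (FreeGroup (Fin m)))
    (w : List (Fin m × Bool)) : Prop :=
  ∀ i j : ℕ, i ≤ w.length → j ≤ w.length →
    (QuotientGroup.mk (FreeGroup.mk (w.take i)) : FreeGroup (Fin m) ⧸ R) =
      QuotientGroup.mk (FreeGroup.mk (w.take j)) → i = j

/-!
The flow of a path records, for every directed edge of the Cayley graph of `F/R`, how often the path
traverses it minus how often it traverses the reverse edge. It depends only on the element of `F`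
represented by the label and is additive on `R`, hence it depends only on the element of `F/R'`.
A self-avoiding path `w` traverses each of its edges once and never backwards, so any path `v` with
the same flow traverses all edges of `w`, and `|w| ≤ |v|`. If `|v| ≤ |w|`, then `v` has no other
edges; as each vertex of `w` is left by just one edge of `w`, the path `v` has to follow `w`.
-/

section CayleyPath

variable {α G : Type*} [Group G] (φ : FreeGroup α →* G)

/-- The directed edges of the Cayley graph of `G`, with respect to the images under `φ` of the free
basis, traversed by the path with label `w` starting at `g`. The edge leaving the vertex `h` with
letter `x` is encoded as `(h, x)`. -/
def cayleyEdges (g : G) : List (α × Bool) → List (G × (α × Bool))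
  | [] => []
  | x :: w => (g, x) :: cayleyEdges (g * φ (FreeGroup.mk [x])) w

/-- The edge of the Cayley graph obtained from `e` by exchanging its endpoints; its letter is the
inverse of that of `e`. -/
def reverseEdge (e : G × (α × Bool)) : G × (α × Bool) :=
  (e.1 * φ (FreeGroup.mk [e.2]), (e.2.1, !e.2.2))

open Classical in
/-- The flow along the edge `e` of the path with label `w` starting at `g`: the number of times the
path traverses `e` minus the number of times it traverses the reverse of `e`. -/
noncomputable def wordFlow (g : G) (w : List (α × Bool)) (e : G × (α × Bool)) : ℤ :=
  (cayleyEdges φ g w).count e - (cayleyEdges φ g w).count (reverseEdge φ e)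

/-- The path in the Cayley graph of `G` with label `w` visits no vertex twice. For `φ` the
quotient map by `R` this is `SelfAvoiding R w`, over an arbitrary alphabet. -/
def IsSelfAvoiding (w : List (α × Bool)) : Prop :=
  Set.InjOn (fun i => φ (FreeGroup.mk (w.take i))) (Set.Iic w.length)

theorem map_mk_append (u v : List (α × Bool)) :
    φ (FreeGroup.mk (u ++ v)) = φ (FreeGroup.mk u) * φ (FreeGroup.mk v) := by
  rw [← FreeGroup.mul_mk, map_mul]

theorem map_mk_cons (x : α × Bool) (w : List (α × Bool)) :
    φ (FreeGroup.mk (x :: w)) = φ (FreeGroup.mk [x]) * φ (FreeGroup.mk w) :=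
  map_mk_append φ [x] w

theorem map_mk_singleton_not (a : α) (b : Bool) :
    φ (FreeGroup.mk [(a, !b)]) = (φ (FreeGroup.mk [(a, b)]))⁻¹ := by
  rw [← map_inv, FreeGroup.inv_mk]
  rfl

theorem reverseEdge_involutive : Function.Involutive (reverseEdge φ) := by
  rintro ⟨g, a, b⟩
  simp [reverseEdge, map_mk_singleton_not]

@[simp]
theorem length_cayleyEdges (g : G) (w : List (α × Bool)) :
    (cayleyEdges φ g w).length = w.length := by
  induction w generalizing g with
  | nil => rfl
  | cons x w ih => simp [cayleyEdges, ih]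

theorem getElem_cayleyEdges (g : G) (w : List (α × Bool)) (i : ℕ)
    (hi : i < (cayleyEdges φ g w).length) :
    (cayleyEdges φ g w)[i] =
      (g * φ (FreeGroup.mk (w.take i)), w[i]'(length_cayleyEdges φ g w ▸ hi)) := by
  induction w generalizing g i with
  | nil => simp [cayleyEdges] at hi
  | cons x w ih =>
    cases i with
    | zero => simp [cayleyEdges, ← FreeGroup.one_eq_mk]
    | succ i => simp [cayleyEdges, ih, map_mk_cons φ x (w.take i), mul_assoc]

variable {φ} in
theorem mem_cayleyEdges_iff {g : G} {w : List (α × Bool)} {e : G × (α × Bool)} :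
    e ∈ cayleyEdges φ g w ↔
      ∃ (i : ℕ) (hi : i < w.length), (g * φ (FreeGroup.mk (w.take i)), w[i]) = e := by
  simp [List.mem_iff_getElem, getElem_cayleyEdges]

theorem cayleyEdges_append (g : G) (u v : List (α × Bool)) :
    cayleyEdges φ g (u ++ v) =
      cayleyEdges φ g u ++ cayleyEdges φ (g * φ (FreeGroup.mk u)) v := by
  induction u generalizing g with
  | nil => simp [cayleyEdges, ← FreeGroup.one_eq_mk]
  | cons x u ih => simp [cayleyEdges, ih, map_mk_cons φ x u, mul_assoc]

theorem wordFlow_append (g : G) (u v : List (α × Bool)) :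
    wordFlow φ g (u ++ v) = wordFlow φ g u + wordFlow φ (g * φ (FreeGroup.mk u)) v := by
  funext e
  simp only [wordFlow, cayleyEdges_append, List.count_append, Pi.add_apply]
  push_cast
  ring

theorem wordFlow_backtrack (g : G) (a : α) (b : Bool) : wordFlow φ g [(a, b), (a, !b)] = 0 := by
  classical
  funext e
  have hedges : cayleyEdges φ g [(a, b), (a, !b)] = [(g, (a, b)), reverseEdge φ (g, (a, b))] := rfl
  simp only [wordFlow, hedges, List.count_cons, List.count_nil, beq_iff_eq,
    (reverseEdge_involutive φ).injective.eq_iff,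
    ← (reverseEdge_involutive φ).eq_iff (x := (g, (a, b))) (y := e), Pi.zero_apply]
  push_cast
  ring

theorem wordFlow_eq_of_step (g : G) {u v : List (α × Bool)} (h : FreeGroup.Red.Step u v) :
    wordFlow φ g u = wordFlow φ g v := by
  obtain @⟨u, v, a, b⟩ := h
  have htrivial : φ (FreeGroup.mk [(a, b), (a, !b)]) = 1 := by
    rw [map_mk_cons, map_mk_singleton_not, mul_inv_cancel]
  calc wordFlow φ g (u ++ (a, b) :: (a, !b) :: v)
      = wordFlow φ g (u ++ ([(a, b), (a, !b)] ++ v)) := rfl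
    _ = wordFlow φ g (u ++ v) := by
      simp only [wordFlow_append, wordFlow_backtrack, htrivial, mul_one, zero_add]

/-- The flow of the path starting at `g` with label any word representing the given element of the
free group. -/
noncomputable def flow (g : G) : FreeGroup α → G × (α × Bool) → ℤ :=
  Quot.lift (wordFlow φ g) fun _ _ => wordFlow_eq_of_step φ g

@[simp]
theorem flow_mk (g : G) (w : List (α × Bool)) : flow φ g (FreeGroup.mk w) = wordFlow φ g w :=
  rfl

theorem flow_mul (g : G) (x y : FreeGroup α) :
    flow φ g (x * y) = flow φ g x + flow φ (g * φ x) y := by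
  induction x using Quot.inductionOn
  induction y using Quot.inductionOn
  exact wordFlow_append φ g _ _

theorem flow_eq_zero_of_mem_commutator (g : G) {r : FreeGroup α} (hr : r ∈ ⁅φ.ker, φ.ker⁆) :
    flow φ g r = 0 := by
  -- Loops at `g` compose additively, so on `φ.ker` the flow is a homomorphism to an abelian group.
  let flowHom : φ.ker →* Multiplicative (G × (α × Bool) → ℤ) :=
    MonoidHom.mk' (fun s => Multiplicative.ofAdd (flow φ g s)) fun s t => by
      rw [Subgroup.coe_mul, flow_mul, φ.mem_ker.1 s.2, mul_one, ofAdd_add]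
  rw [← Subgroup.map_subtype_commutator] at hr
  obtain ⟨s, hs, rfl⟩ := hr
  exact Abelianization.commutator_subset_ker flowHom hs

theorem flow_eq_of_inv_mul_mem_commutator (g : G) {x y : FreeGroup α}
    (h : x⁻¹ * y ∈ ⁅φ.ker, φ.ker⁆) : flow φ g x = flow φ g y := by
  rw [← mul_inv_cancel_left x y, flow_mul, flow_eq_zero_of_mem_commutator φ _ h, add_zero]

variable {φ} in
theorem mem_cayleyEdges_of_wordFlow_pos {g : G} {w : List (α × Bool)} {e : G × (α × Bool)}
    (h : 0 < wordFlow φ g w e) : e ∈ cayleyEdges φ g w := by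
  classical
  rw [wordFlow] at h
  exact List.count_pos_iff.1 (by omega)

namespace IsSelfAvoiding

variable {φ} {w : List (α × Bool)}

theorem nodup_cayleyEdges (hw : IsSelfAvoiding φ w) (g : G) : (cayleyEdges φ g w).Nodup := by
  rw [List.nodup_iff_injective_get]
  rintro ⟨i, hi⟩ ⟨j, hj⟩ hij
  rw [length_cayleyEdges] at hi hj
  simp only [List.get_eq_getElem, getElem_cayleyEdges, Prod.mk.injEq, mul_right_inj] at hij
  exact Fin.ext (hw hi.le hj.le hij.1)

theorem reverseEdge_notMem_cayleyEdges (hw : IsSelfAvoiding φ w) {g : G} {e : G × (α × Bool)}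
    (he : e ∈ cayleyEdges φ g w) : reverseEdge φ e ∉ cayleyEdges φ g w := by
  intro hrev
  obtain ⟨i, hi, rfl⟩ := mem_cayleyEdges_iff.1 he
  obtain ⟨j, hj, hji⟩ := mem_cayleyEdges_iff.1 hrev
  have target_eq : ∀ k (hk : k < w.length), φ (FreeGroup.mk (w.take (k + 1))) =
      φ (FreeGroup.mk (w.take k)) * φ (FreeGroup.mk [w[k]]) := fun k hk => by
    rw [← map_mk_append, List.take_append_getElem]
  simp only [reverseEdge, Prod.mk.injEq, mul_assoc, mul_right_inj] at hji
  obtain ⟨source_j, letter_j⟩ := hji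
  have hj_succ : j = i + 1 := hw hj.le (Nat.succ_le_of_lt hi) (source_j.trans (target_eq i hi).symm)
  have hi_succ : j + 1 = i := by
    refine hw (Nat.succ_le_of_lt hj) hi.le ((target_eq j hj).trans ?_)
    rw [source_j, letter_j, map_mk_singleton_not, mul_inv_cancel_right]
  omega

theorem wordFlow_eq_one (hw : IsSelfAvoiding φ w) {g : G} {e : G × (α × Bool)}
    (he : e ∈ cayleyEdges φ g w) : wordFlow φ g w e = 1 := by
  classical
  rw [wordFlow, List.count_eq_one_of_mem (hw.nodup_cayleyEdges g) he,
    List.count_eq_zero_of_not_mem (hw.reverseEdge_notMem_cayleyEdges he), Nat.cast_one,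
    Nat.cast_zero, sub_zero]

theorem cayleyEdges_subset_of_wordFlow_eq (hw : IsSelfAvoiding φ w) {g : G} {v : List (α × Bool)}
    (h : wordFlow φ g w = wordFlow φ g v) : cayleyEdges φ g w ⊆ cayleyEdges φ g v := by
  intro e he
  apply mem_cayleyEdges_of_wordFlow_pos
  rw [← h, hw.wordFlow_eq_one he]
  exact one_pos

theorem isPrefix_of_cayleyEdges_subset (hw : IsSelfAvoiding φ w) {g : G} {v : List (α × Bool)}
    (h : cayleyEdges φ g v ⊆ cayleyEdges φ g w) : v <+: w := by
  induction v using List.reverseRecOn with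
  | nil => exact List.nil_prefix
  | append_singleton u x ih =>
    rw [cayleyEdges_append, List.append_subset] at h
    have hu : u <+: w := ih h.1
    obtain ⟨i, hi, hix⟩ := mem_cayleyEdges_iff.1 (h.2 (List.mem_singleton_self _))
    simp only [Prod.mk.injEq, mul_right_inj] at hix
    obtain ⟨source_eq, rfl⟩ := hix
    have hi_eq : i = u.length := hw hi.le hu.length_le (by
      simpa only [← List.prefix_iff_eq_take.1 hu] using source_eq)
    have hu_take : u = w.take i := hi_eq ▸ List.prefix_iff_eq_take.1 hu
    rw [hu_take, List.take_append_getElem]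
    exact List.take_prefix _ _

theorem length_lt_of_wordFlow_eq (hw : IsSelfAvoiding φ w) {g : G} {v : List (α × Bool)}
    (hne : w ≠ v) (h : wordFlow φ g w = wordFlow φ g v) : w.length < v.length := by
  have hsub : (cayleyEdges φ g w).Subperm (cayleyEdges φ g v) :=
    (hw.nodup_cayleyEdges g).subperm (hw.cayleyEdges_subset_of_wordFlow_eq h)
  by_contra! hle
  have hperm : (cayleyEdges φ g w).Perm (cayleyEdges φ g v) :=
    hsub.perm_of_length_le (by simpa using hle)
  have hprefix : v <+: w := hw.isPrefix_of_cayleyEdges_subset hperm.symm.subset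
  exact hne (hprefix.eq_of_length (by simpa using hperm.length_eq.symm)).symm

end IsSelfAvoiding

end CayleyPath

theorem self_avoiding_words_distinct_and_geodesic_general {α : Type*} (R : Subgroup (FreeGroup α))
    [R.Normal] {w v : List (α × Bool)} (hw : IsSelfAvoiding (QuotientGroup.mk' R) w) (hne : w ≠ v)
    (h : (QuotientGroup.mk (FreeGroup.mk w) : FreeGroup α ⧸ (⁅R, R⁆ : Subgroup _)) =
      QuotientGroup.mk (FreeGroup.mk v)) :
    w.length < v.length := by
  have hmem := QuotientGroup.eq.1 h
  rw [← QuotientGroup.ker_mk' R] at hmem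
  exact hw.length_lt_of_wordFlow_eq hne (flow_eq_of_inv_mul_mem_commutator _ 1 hmem)

section WordLength

variable {m : ℕ}

theorem wordEval_eq_lift {G : Type*} [Group G] (σ : Fin m → G) (w : List (Fin m × Bool)) :
    wordEval σ w = FreeGroup.lift σ (FreeGroup.mk w) := by
  simp [wordEval, FreeGroup.lift_mk, Bool.cond_eq_ite]

theorem wordEval_mk_of (N : Subgroup (FreeGroup (Fin m))) [N.Normal] (w : List (Fin m × Bool)) :
    wordEval (fun i => (QuotientGroup.mk (FreeGroup.of i) : FreeGroup (Fin m) ⧸ N)) w =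
      QuotientGroup.mk (FreeGroup.mk w) := by
  have hlift : FreeGroup.lift (fun i => (QuotientGroup.mk (FreeGroup.of i) : _ ⧸ N)) =
      QuotientGroup.mk' N := by
    ext i
    simp
  rw [wordEval_eq_lift, hlift, QuotientGroup.mk'_apply]

theorem wordLength_wordEval_eq_length {G : Type*} [Group G] {σ : Fin m → G}
    {w : List (Fin m × Bool)} (h : ∀ v, wordEval σ v = wordEval σ w → w.length ≤ v.length) :
    wordLength σ (wordEval σ w) = w.length := by
  have hleast : IsLeast {n | ∃ v : List (Fin m × Bool), v.length = n ∧
      wordEval σ v = wordEval σ w} w.length :=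
    ⟨⟨w, rfl, rfl⟩, by rintro _ ⟨v, rfl, hv⟩; exact h v hv⟩
  exact hleast.csInf_eq

theorem SelfAvoiding.isSelfAvoiding {R : Subgroup (FreeGroup (Fin m))} [R.Normal]
    {w : List (Fin m × Bool)} (hw : SelfAvoiding R w) : IsSelfAvoiding (QuotientGroup.mk' R) w :=
  fun i hi j hj => hw i j hi hj

theorem SelfAvoiding.wordLength_eq_length {R : Subgroup (FreeGroup (Fin m))} [R.Normal]
    {w : List (Fin m × Bool)} (hw : SelfAvoiding R w) :
    wordLength (fun i => (QuotientGroup.mk (FreeGroup.of i) :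
      FreeGroup (Fin m) ⧸ (⁅R, R⁆ : Subgroup _))) (QuotientGroup.mk (FreeGroup.mk w)) =
      w.length := by
  rw [← wordEval_mk_of]
  refine wordLength_wordEval_eq_length fun v hv => ?_
  rw [wordEval_mk_of, wordEval_mk_of] at hv
  obtain rfl | hne := eq_or_ne w v
  · rfl
  · exact (self_avoiding_words_distinct_and_geodesic_general R hw.isSelfAvoiding hne hv.symm).le

end WordLength

/-- Let `R ⊴ F_m` and let `w₁, w₂` be words whose paths in the Cayley
graph of `F_m/R` are self-avoiding. If `w₁ ≠ w₂` then `w₁` and `w₂` represent distinct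
elements of `F_m/R'`; moreover the path labelled by such a word in the Cayley graph of
`F_m/R'` is geodesic: the element of `F_m/R'` it represents has word length exactly the
length of the word. -/
theorem self_avoiding_words_distinct_and_geodesic (m : ℕ) (hm : 2 ≤ m)
    (R : Subgroup (FreeGroup (Fin m))) [R.Normal]
    (w₁ w₂ : List (Fin m × Bool))
    (h₁ : SelfAvoiding R w₁) (h₂ : SelfAvoiding R w₂) :
    (w₁ ≠ w₂ →
      (QuotientGroup.mk (FreeGroup.mk w₁) :
          FreeGroup (Fin m) ⧸ (⁅R, R⁆ : Subgroup _)) ≠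
        QuotientGroup.mk (FreeGroup.mk w₂)) ∧
    wordLength (fun i =>
        (QuotientGroup.mk (FreeGroup.of i) :
          FreeGroup (Fin m) ⧸ (⁅R, R⁆ : Subgroup _)))
      (QuotientGroup.mk (FreeGroup.mk w₁)) = w₁.length ∧
    wordLength (fun i =>
        (QuotientGroup.mk (FreeGroup.of i) :
          FreeGroup (Fin m) ⧸ (⁅R, R⁆ : Subgroup _)))
      (QuotientGroup.mk (FreeGroup.mk w₂)) = w₂.length := by
  refine ⟨fun hne h => ?_, h₁.wordLength_eq_length, h₂.wordLength_eq_length⟩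
  exact lt_asymm
    (self_avoiding_words_distinct_and_geodesic_general R h₁.isSelfAvoiding hne h)
    (self_avoiding_words_distinct_and_geodesic_general R h₂.isSelfAvoiding hne.symm h.symm)
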